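/- Brascamp–Lieb exponential moment comparison (Lemma 3.5, estimate (3.2)). Let n ≥ 1, let V : ℝⁿ → ℝ be an even, convex function, and let A ∈ ℝ^{n×n} be a symmetric positive definite matrix. Define the probability measures μ and 𝒢 on ℝⁿ by dμ(φ) = Z₁^{-1} exp( -⟨φ, Aφ⟩ - V(φ) ) dφ and d𝒢(φ) = Z₂^{-1} exp( -⟨φ, Aφ⟩ ) dφ, where dφ is Lebesgue measure on ℝⁿ and Z₁, Z₂ are the normalization constants making μ and 𝒢 probability measures. Then for every linear function f : ℝⁿ → ℝ and every β > 0, one has ∫ exp( β |f(φ)|² ) dμ(φ) ≤ ∫ exp( β |f(φ)|² ) d𝒢(φ), where both sides are interpreted as Lebesgue integrals with values in [0,∞]. -/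

import Mathlib

open MeasureTheory Real Matrix ENNReal

noncomputable section

/-!
Write `f = polar Q u`. The Hubbard–Stratonovich identity expresses `exp (β f²)` as a Gaussian
mixture of the exponentials `exp (polar Q (2βs • u))`, and completing the square trades the tilt by
`polar Q v` for a factor `exp (Q v)`, which does not involve `V`, and a translation of `V` by `v`.
So it suffices that translating an even convex `V` does not increase the partition function
`∫ exp (-Q - V)`. A dilation by `1 + t` gives this up to a factor `(1 + t) ^ dim E * exp (Q w / t)`.
The loss disappears by tensorisation: the square of a partition function, rotated to the
coordinates `x = a + b`, `y = a - b`, is a mixture of partition functions for `2 • Q` whose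
potentials `V (a + b) + V (a - b)` are again even and convex in `b`. Iterating `k` times and taking
`t = 2 ^ k`, the loss becomes the `2 ^ k`-th root of `(1 + 2 ^ k) ^ dim E * exp (Q w)`, which tends
to `1`.
-/

section Exp

theorem ofReal_exp_add (a b : ℝ) :
    ENNReal.ofReal (exp (a + b)) = ENNReal.ofReal (exp a) * ENNReal.ofReal (exp b) := by
  rw [Real.exp_add, ENNReal.ofReal_mul (exp_pos a).le]

theorem lintegral_ofReal_exp_ne_zero {α : Type*} [MeasurableSpace α] {μ : Measure α} [NeZero μ]
    {g : α → ℝ} (hg : Measurable g) : ∫⁻ x, ENNReal.ofReal (exp (g x)) ∂μ ≠ 0 := by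
  rw [Ne, lintegral_eq_zero_iff hg.exp.ennreal_ofReal]
  intro h
  obtain ⟨x, hx⟩ := h.exists
  exact (ENNReal.ofReal_pos.2 (exp_pos _)).ne' hx

theorem lintegral_exp_linear_sub_sq (β t : ℝ) :
    ∫⁻ s : ℝ, ENNReal.ofReal (exp (2 * β * s * t - β * s ^ 2)) =
      ENNReal.ofReal (exp (β * t ^ 2)) * ∫⁻ s : ℝ, ENNReal.ofReal (exp (-β * s ^ 2)) := by
  rw [← lintegral_const_mul' _ _ ENNReal.ofReal_ne_top, ← lintegral_add_right_eq_self _ t]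
  congr 1 with s
  rw [← ofReal_exp_add]
  ring_nf

theorem tendsto_one_add_pow_mul_pow_of_lt_one {c : ℝ} (hc₀ : 0 ≤ c) (hc₁ : c < 1) (d : ℕ) :
    Filter.Tendsto (fun m : ℕ => (1 + (m : ℝ)) ^ d * c ^ m) Filter.atTop (nhds 0) := by
  have hlim : Filter.Tendsto (fun m : ℕ => 2 ^ d * ((m : ℝ) ^ d * c ^ m)) Filter.atTop
      (nhds 0) := by
    simpa using (tendsto_pow_const_mul_const_pow_of_lt_one d hc₀ hc₁).const_mul (2 ^ d)
  refine squeeze_zero' (.of_forall fun m => by positivity) ?_ hlim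
  filter_upwards [Filter.eventually_ge_atTop 1] with m hm
  have hm' : (1 : ℝ) ≤ m := by exact_mod_cast hm
  rw [← mul_assoc, ← mul_pow]
  gcongr
  linarith

theorem exists_pow_two_pow_mul_ofReal_le_one {c : ℝ≥0∞} (hc : c < 1) (d : ℕ) (C : ℝ) :
    ∃ k : ℕ, c ^ 2 ^ k * ENNReal.ofReal ((1 + 2 ^ k) ^ d * C) ≤ 1 := by
  lift c to NNReal using hc.ne_top
  have hc' : (c : ℝ) < 1 := by exact_mod_cast hc
  have hlim := (tendsto_one_add_pow_mul_pow_of_lt_one c.coe_nonneg hc' d).mul_const C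
  rw [zero_mul] at hlim
  obtain ⟨k, hk⟩ := ((hlim.comp (tendsto_pow_atTop_atTop_of_one_lt one_lt_two)).eventually_le_const
    one_pos).exists
  refine ⟨k, ?_⟩
  rw [← ENNReal.ofReal_coe_nnreal, ← ENNReal.ofReal_pow c.coe_nonneg,
    ← ENNReal.ofReal_mul (by positivity), ENNReal.ofReal_le_one]
  calc (c : ℝ) ^ 2 ^ k * ((1 + 2 ^ k) ^ d * C)
      = (1 + ((2 ^ k : ℕ) : ℝ)) ^ d * (c : ℝ) ^ 2 ^ k * C := by push_cast; ring
    _ ≤ 1 := hk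

end Exp

section EvenConvex

variable {E : Type*} [AddCommGroup E] {V : E → ℝ}

/-- The potential that `V ⊕ V` induces on the second of the rotated coordinates
`a = (x + y) / 2`, `b = (x - y) / 2` when the first one is frozen. -/
def rotatedPotential (V : E → ℝ) (a b : E) : ℝ := V (a + b) + V (a - b)

theorem even_rotatedPotential (V : E → ℝ) (a : E) : (rotatedPotential V a).Even := fun b => by
  simp only [rotatedPotential, sub_neg_eq_add, ← sub_eq_add_neg, add_comm]

variable [Module ℝ E]

theorem convexOn_rotatedPotential (hV : ConvexOn ℝ Set.univ V) (a : E) :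
    ConvexOn ℝ Set.univ (rotatedPotential V a) := by
  have hadd : ConvexOn ℝ Set.univ fun b => V (a + b) := by
    simpa [Function.comp_def] using hV.translate_right a
  have hsub : ConvexOn ℝ Set.univ fun b => V (a - b) := by
    simpa [Function.comp_def, sub_eq_add_neg] using
      hadd.comp_linearMap (-LinearMap.id : E →ₗ[ℝ] E)
  exact hadd.add hsub

theorem apply_smul_le_of_even_of_quasiconvexOn (hVeven : V.Even)
    (hV : QuasiconvexOn ℝ Set.univ V) {r : ℝ} (hr : |r| ≤ 1) (x : E) : V (r • x) ≤ V x := by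
  have hbalanced : Balanced ℝ {y | V y ≤ V x} :=
    (balanced_iff_neg_mem (by simpa using hV (V x))).2 fun y hy => (hVeven y).trans_le hy
  exact hbalanced.smul_mem hr (le_refl (V x))

end EvenConvex

section QuadraticForm

variable {E : Type*} [AddCommGroup E]

theorem quadraticForm_add_add_sub {R : Type*} [CommRing R] [Module R E] (Q : QuadraticForm R E)
    (a b : E) :
    Q (a + b) + Q (a - b) = 2 * (Q a + Q b) := by
  rw [sub_eq_add_neg, QuadraticMap.map_add Q a b, QuadraticMap.map_add Q a (-b), Q.map_neg,
    QuadraticMap.polar_neg_right]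
  ring

variable {K : Type*} [Field K] [Module K E] {Q : QuadraticForm K E}

theorem quadraticForm_add_le [LinearOrder K] [IsStrictOrderedRing K] (hQ : ∀ x, 0 ≤ Q x) {t : K}
    (ht : 0 < t) (a b : E) :
    Q (a + b) ≤ (1 + t) * Q a + (1 + t⁻¹) * Q b := by
  have h : 0 ≤ t⁻¹ * Q (t • a - b) := mul_nonneg (by positivity) (hQ _)
  rw [sub_eq_add_neg, QuadraticMap.map_add Q, Q.map_neg, QuadraticMap.polar_neg_right, Q.map_smul,
    QuadraticMap.polar_smul_left] at h
  simp only [smul_eq_mul] at h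
  field_simp at h
  rw [QuadraticMap.map_add Q]
  field_simp
  linarith

theorem exists_forall_eq_polar [NeZero (2 : K)] [FiniteDimensional K E] (hQ : Q.Anisotropic)
    (f : E →ₗ[K] K) : ∃ u, ∀ x, f x = QuadraticMap.polar Q u x := by
  have hinj : Function.Injective Q.polarBilin := by
    refine (injective_iff_map_eq_zero Q.polarBilin).2 fun x hx => hQ x ?_
    simpa [two_ne_zero] using (QuadraticMap.polar_self Q x).symm.trans (DFunLike.congr_fun hx x)
  obtain ⟨u, hu⟩ := (LinearMap.injective_iff_surjective_of_finrank_eq_finrank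
    Subspace.dual_finrank_eq.symm).1 hinj f
  exact ⟨u, fun x => by rw [← hu, QuadraticMap.polarBilin_apply_apply]⟩

end QuadraticForm

section Gibbs

variable {E : Type*} [AddCommGroup E] [Module ℝ E]

/-- The exponential moment of order `β` of the squared functional `polar Q u` under the Gaussian
measure with density proportional to `exp (-Q)`, as a ratio of one-dimensional integrals: the
outcome of integrating out `E` after linearising the square. -/
def gaussianMoment (Q : QuadraticForm ℝ E) (u : E) (β : ℝ) : ℝ≥0∞ :=
  (∫⁻ s : ℝ, ENNReal.ofReal (exp (Q ((2 * β * s) • u) - β * s ^ 2))) /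
    ∫⁻ s : ℝ, ENNReal.ofReal (exp (-β * s ^ 2))

variable [MeasurableSpace E] (μ : Measure E)

/-- The partition function of the Gibbs weight `exp (-Q - V)` whose potential `V` has been
translated by `-w`, relative to `μ`. -/
def shiftedPartition (V : E → ℝ) (Q : QuadraticForm ℝ E) (w : E) : ℝ≥0∞ :=
  ∫⁻ x, ENNReal.ofReal (exp (-Q x - V (x + w))) ∂μ

theorem shiftedPartition_zero_right (V : E → ℝ) (Q : QuadraticForm ℝ E) :
    shiftedPartition μ V Q 0 = ∫⁻ x, ENNReal.ofReal (exp (-Q x - V x)) ∂μ := by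
  simp only [shiftedPartition, add_zero]

theorem shiftedPartition_neg [MeasurableNeg E] [μ.IsNegInvariant] {V : E → ℝ} (hVeven : V.Even)
    (Q : QuadraticForm ℝ E) (w : E) :
    shiftedPartition μ V Q (-w) = shiftedPartition μ V Q w := by
  rw [shiftedPartition, ← lintegral_neg_eq_self]
  simp only [Q.map_neg, ← neg_add, hVeven _, shiftedPartition]

theorem lintegral_exp_polar [MeasurableAdd E] [μ.IsAddRightInvariant] (V : E → ℝ)
    (Q : QuadraticForm ℝ E) (v : E) :
    ∫⁻ x, ENNReal.ofReal (exp (QuadraticMap.polar Q v x + (-Q x - V x))) ∂μ =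
      ENNReal.ofReal (exp (Q v)) * shiftedPartition μ V Q v := by
  rw [shiftedPartition, ← lintegral_const_mul' _ _ ENNReal.ofReal_ne_top,
    ← lintegral_add_right_eq_self _ v]
  congr 1 with x
  rw [← ofReal_exp_add, QuadraticMap.polar_add_right, QuadraticMap.polar_self,
    QuadraticMap.map_add Q, QuadraticMap.polar_comm Q x v, two_smul]
  ring_nf

end Gibbs

section Haar

open Module

variable {E : Type*} [NormedAddCommGroup E] [NormedSpace ℝ E] [FiniteDimensional ℝ E]

theorem continuous_quadraticForm (Q : QuadraticForm ℝ E) : Continuous Q := by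
  have h : Continuous fun x => (QuadraticMap.associated Q).toContinuousBilinearMap x x := by
    fun_prop
  simpa [QuadraticMap.associated_eq_self_apply] using h

variable [MeasurableSpace E] [BorelSpace E] (μ : Measure E) [μ.IsAddHaarMeasure]

theorem lintegral_eq_pow_finrank_mul_lintegral_comp_smul (F : E → ℝ≥0∞) {r : ℝ} (hr : r ≠ 0) :
    ∫⁻ x, F x ∂μ = ENNReal.ofReal |r ^ finrank ℝ E| * ∫⁻ x, F (r • x) ∂μ := by
  have hpos : 0 < |r ^ finrank ℝ E| := abs_pos.2 (pow_ne_zero _ hr)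
  have h := lintegral_map_equiv (μ := μ) F (MeasurableEquiv.smul₀ r hr)
  rw [MeasurableEquiv.coe_smul₀, Measure.map_addHaar_smul μ hr, lintegral_smul_measure] at h
  rw [← h, smul_eq_mul, ← mul_assoc, ← ENNReal.ofReal_mul hpos.le, abs_inv,
    mul_inv_cancel₀ hpos.ne', ENNReal.ofReal_one, one_mul]

theorem lintegral_lintegral_eq_lintegral_add_sub {F : E → E → ℝ≥0∞}
    (hF : Measurable (Function.uncurry F)) :
    ∫⁻ x, ∫⁻ y, F x y ∂μ ∂μ =
      ENNReal.ofReal (2 ^ finrank ℝ E) * ∫⁻ a, ∫⁻ b, F (a + b) (a - b) ∂μ ∂μ := by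
  have hmeas : Measurable (Function.uncurry fun x b : E => F x (x - (2 : ℝ) • b)) :=
    hF.comp (f := fun p : E × E => (p.1, p.1 - (2 : ℝ) • p.2)) (by fun_prop)
  have hmeas' : Measurable (Function.uncurry fun b a : E => F (a + b) (a - b)) :=
    hF.comp (f := fun p : E × E => (p.2 + p.1, p.2 - p.1)) (by fun_prop)
  calc ∫⁻ x, ∫⁻ y, F x y ∂μ ∂μ
      = ∫⁻ x, ENNReal.ofReal (2 ^ finrank ℝ E) * ∫⁻ b, F x (x - (2 : ℝ) • b) ∂μ ∂μ := by
        congr 1 with x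
        rw [← lintegral_sub_left_eq_self (F x) x,
          lintegral_eq_pow_finrank_mul_lintegral_comp_smul μ _ two_ne_zero,
          abs_of_pos (by positivity)]
    _ = ENNReal.ofReal (2 ^ finrank ℝ E) * ∫⁻ b, ∫⁻ x, F x (x - (2 : ℝ) • b) ∂μ ∂μ := by
        rw [lintegral_const_mul' _ _ ENNReal.ofReal_ne_top,
          lintegral_lintegral_swap hmeas.aemeasurable]
    _ = ENNReal.ofReal (2 ^ finrank ℝ E) * ∫⁻ b, ∫⁻ a, F (a + b) (a - b) ∂μ ∂μ := by
        congr 2 with b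
        rw [← lintegral_add_right_eq_self _ b]
        simp only [two_smul, add_sub_add_right_eq_sub]
    _ = ENNReal.ofReal (2 ^ finrank ℝ E) * ∫⁻ a, ∫⁻ b, F (a + b) (a - b) ∂μ ∂μ := by
        rw [lintegral_lintegral_swap hmeas'.aemeasurable]

theorem integrable_exp_neg_quadraticForm {Q : QuadraticForm ℝ E} (hQ : Q.PosDef) :
    Integrable (fun x => exp (-Q x)) μ := by
  obtain ⟨w, ⟨L⟩⟩ := Q.equivalent_weightedSumSquares
  have hQL (x : E) : Q x = ∑ i, w i * L x i ^ 2 := by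
    rw [← L.map_app, QuadraticMap.weightedSumSquares_apply]
    simp only [sq, smul_eq_mul]
  have hw (i) : 0 < w i := by
    simpa [hQL, Pi.single_apply] using hQ (L.symm (Pi.single i 1)) (by simp)
  have hvol : Integrable fun y : Fin (finrank ℝ E) → ℝ => ∏ i, exp (-w i * y i ^ 2) :=
    Integrable.fintype_prod fun i => integrable_exp_neg_mul_sq (hw i)
  have hmap : Integrable (fun y => ∏ i, exp (-w i * y i ^ 2)) (μ.map L.toLinearEquiv) := by
    rw [Measure.isAddLeftInvariant_eq_smul (μ.map L.toLinearEquiv) volume]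
    exact hvol.smul_measure_nnreal
  have hL : Continuous L.toLinearEquiv :=
    L.toLinearEquiv.toLinearMap.continuous_of_finiteDimensional
  convert hmap.comp_measurable hL.measurable using 2 with x
  simp [hQL, ← Real.exp_sum]

variable {V : E → ℝ} {Q : QuadraticForm ℝ E}

theorem measurable_gibbsWeight (hV : Continuous V) (Q : QuadraticForm ℝ E) (w : E) :
    Measurable fun x => ENNReal.ofReal (exp (-Q x - V (x + w))) := by
  have hQ := continuous_quadraticForm Q
  fun_prop

theorem shiftedPartition_sq (hV : Continuous V) (hVeven : V.Even) (Q : QuadraticForm ℝ E) (w : E) :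
    shiftedPartition μ V Q w ^ 2 =
      ENNReal.ofReal (2 ^ finrank ℝ E) * ∫⁻ a, ENNReal.ofReal (exp (-(2 * Q a))) *
        shiftedPartition μ (rotatedPotential V a) ((2 : ℝ) • Q) w ∂μ := by
  have hmeas := measurable_gibbsWeight hV Q
  rw [sq]
  nth_rw 2 [← shiftedPartition_neg μ hVeven]
  rw [shiftedPartition, shiftedPartition,
    ← lintegral_lintegral_mul (hmeas w).aemeasurable (hmeas (-w)).aemeasurable,
    lintegral_lintegral_eq_lintegral_add_sub μ
      (by exact ((hmeas w).comp measurable_fst).mul ((hmeas (-w)).comp measurable_snd))]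
  congr 2 with a
  rw [shiftedPartition, ← lintegral_const_mul' _ _ ENNReal.ofReal_ne_top]
  congr 1 with b
  have hQ := quadraticForm_add_add_sub Q a b
  have hw : a - b + -w = a - (b + w) := by abel
  rw [← ofReal_exp_add, ← ofReal_exp_add, hw, add_assoc, rotatedPotential,
    _root_.smul_apply, smul_eq_mul]
  congr 2
  linarith

variable {μ}

theorem shiftedPartition_le_mul (hVeven : V.Even) (hV : QuasiconvexOn ℝ Set.univ V)
    (hQ : ∀ x, 0 ≤ Q x) (w : E) {t : ℝ} (ht : 0 < t) :
    shiftedPartition μ V Q w ≤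
      ENNReal.ofReal ((1 + t) ^ finrank ℝ E * exp (t⁻¹ * Q w)) * shiftedPartition μ V Q 0 := by
  have hpot (x : E) : V x ≤ V ((1 + t) • x) := by
    have h := apply_smul_le_of_even_of_quasiconvexOn hVeven hV (r := (1 + t)⁻¹)
      (by rw [abs_of_pos (by positivity)]; exact inv_le_one_of_one_le₀ (by linarith)) ((1 + t) • x)
    rwa [inv_smul_smul₀ (by positivity)] at h
  have hquad (x : E) : Q x - t⁻¹ * Q w ≤ Q ((1 + t) • x - w) := by
    have h := quadraticForm_add_le hQ ht ((1 + t) • x - w) w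
    rw [sub_add_cancel, Q.map_smul, smul_eq_mul] at h
    have ht' : (1 + t) * (t⁻¹ * Q w) = (1 + t⁻¹) * Q w := by field_simp; ring
    refine le_of_mul_le_mul_left ?_ (by positivity : 0 < 1 + t)
    linarith [mul_nonneg (by positivity : 0 ≤ t * (1 + t)) (hQ x)]
  rw [shiftedPartition_zero_right, shiftedPartition, ← lintegral_sub_right_eq_self _ w,
    lintegral_eq_pow_finrank_mul_lintegral_comp_smul μ _ (by positivity : 1 + t ≠ 0),
    abs_of_pos (by positivity), ENNReal.ofReal_mul (by positivity), mul_assoc]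
  gcongr
  rw [← lintegral_const_mul' _ _ ENNReal.ofReal_ne_top]
  refine lintegral_mono fun x => ?_
  rw [← ofReal_exp_add, sub_add_cancel]
  gcongr
  linarith [hpot x, hquad x]

theorem mul_shiftedPartition_le_of_two_pow {w : E} {c : ℝ≥0∞} (hc : c ≠ ∞) {k : ℕ}
    (h : ∀ W : E → ℝ, W.Even → ConvexOn ℝ Set.univ W →
      c ^ 2 ^ k * shiftedPartition μ W ((2 ^ k : ℝ) • Q) w ≤
        shiftedPartition μ W ((2 ^ k : ℝ) • Q) 0)
    (hVeven : V.Even) (hV : ConvexOn ℝ Set.univ V) :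
    c * shiftedPartition μ V Q w ≤ shiftedPartition μ V Q 0 := by
  induction k generalizing Q c V with
  | zero => simpa using h V hVeven hV
  | succ k ih =>
    have hrotated (a : E) : c ^ 2 * shiftedPartition μ (rotatedPotential V a) ((2 : ℝ) • Q) w ≤
        shiftedPartition μ (rotatedPotential V a) ((2 : ℝ) • Q) 0 := by
      refine ih (ENNReal.pow_ne_top hc) (fun W hWeven hW => ?_) (even_rotatedPotential V a)
        (convexOn_rotatedPotential hV a)
      simpa only [smul_smul, ← pow_mul, ← pow_succ, ← pow_succ'] using h W hWeven hW
    have hVcont : Continuous V := hV.locallyLipschitz.continuous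
    rw [← ENNReal.pow_le_pow_left_iff two_ne_zero, mul_pow, shiftedPartition_sq μ hVcont hVeven,
      shiftedPartition_sq μ hVcont hVeven, mul_left_comm,
      ← lintegral_const_mul' _ _ (ENNReal.pow_ne_top hc)]
    refine mul_le_mul_right (lintegral_mono fun a => ?_) _
    exact (mul_left_comm _ _ _).trans_le (mul_le_mul_right (hrotated a) _)

theorem shiftedPartition_le (hVeven : V.Even) (hV : ConvexOn ℝ Set.univ V)
    (hQ : ∀ x, 0 ≤ Q x) (w : E) :
    shiftedPartition μ V Q w ≤ shiftedPartition μ V Q 0 := by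
  refine ENNReal.le_of_forall_lt_one_mul_le fun c hc => ?_
  obtain ⟨k, hk⟩ := exists_pow_two_pow_mul_ofReal_le_one hc (finrank ℝ E) (exp (Q w))
  refine mul_shiftedPartition_le_of_two_pow hc.ne_top (k := k) (fun W hWeven hW => ?_) hVeven hV
  have hdilate := shiftedPartition_le_mul (μ := μ) hWeven hW.quasiconvexOn
    (Q := (2 ^ k : ℝ) • Q) (fun x => mul_nonneg (by positivity) (hQ x)) w (t := 2 ^ k)
    (by positivity)
  rw [_root_.smul_apply, smul_eq_mul, inv_mul_cancel_left₀ (by positivity)] at hdilate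
  calc _ ≤ c ^ 2 ^ k * (ENNReal.ofReal ((1 + 2 ^ k) ^ finrank ℝ E * exp (Q w)) *
        shiftedPartition μ W ((2 ^ k : ℝ) • Q) 0) := by gcongr
    _ ≤ 1 * shiftedPartition μ W ((2 ^ k : ℝ) • Q) 0 := by rw [← mul_assoc]; gcongr
    _ = _ := one_mul _

variable (μ)

theorem lintegral_exp_sq_polar (hV : Continuous V) (Q : QuadraticForm ℝ E) (u : E) {β : ℝ}
    (hβ : 0 < β) :
    ∫⁻ x, ENNReal.ofReal (exp (β * QuadraticMap.polar Q u x ^ 2) * exp (-Q x - V x)) ∂μ =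
      (∫⁻ s : ℝ, ENNReal.ofReal (exp (Q ((2 * β * s) • u) - β * s ^ 2)) *
        shiftedPartition μ V Q ((2 * β * s) • u)) /
          ∫⁻ s : ℝ, ENNReal.ofReal (exp (-β * s ^ 2)) := by
  have hQ := continuous_quadraticForm Q
  have hpolar : Continuous (QuadraticMap.polar Q u) := by
    unfold QuadraticMap.polar
    fun_prop
  rw [ENNReal.eq_div_iff (lintegral_ofReal_exp_ne_zero (by fun_prop))
    (integrable_exp_neg_mul_sq hβ).lintegral_lt_top.ne, mul_comm]
  calc _ = ∫⁻ x, ∫⁻ s : ℝ, ENNReal.ofReal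
          (exp (2 * β * s * QuadraticMap.polar Q u x - β * s ^ 2 + (-Q x - V x))) ∂volume ∂μ := by
        rw [← lintegral_mul_const _ (by fun_prop)]
        congr 1 with x
        simp_rw [ofReal_exp_add]
        rw [lintegral_mul_const' _ _ ENNReal.ofReal_ne_top, lintegral_exp_linear_sub_sq,
          ENNReal.ofReal_mul (exp_pos _).le, mul_right_comm]
    _ = ∫⁻ s : ℝ, ∫⁻ x, ENNReal.ofReal
          (exp (2 * β * s * QuadraticMap.polar Q u x - β * s ^ 2 + (-Q x - V x))) ∂μ := by
        refine lintegral_lintegral_swap (Measurable.aemeasurable ?_)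
        fun_prop
    _ = _ := by
        congr 1 with s
        rw [sub_eq_neg_add, ofReal_exp_add, mul_assoc (ENNReal.ofReal _), ← lintegral_exp_polar,
          ← lintegral_const_mul' _ _ ENNReal.ofReal_ne_top]
        congr 1 with x
        rw [← ofReal_exp_add, QuadraticMap.polar_smul_left, smul_eq_mul, sub_eq_neg_add, add_assoc]

theorem lintegral_exp_sq_polar_div_le (hVeven : V.Even) (hV : ConvexOn ℝ Set.univ V)
    (hQ : ∀ x, 0 ≤ Q x) (u : E) {β : ℝ} (hβ : 0 < β) :
    (∫⁻ x, ENNReal.ofReal (exp (β * QuadraticMap.polar Q u x ^ 2) * exp (-Q x - V x)) ∂μ) /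
        (∫⁻ x, ENNReal.ofReal (exp (-Q x - V x)) ∂μ) ≤ gaussianMoment Q u β := by
  have hQc := continuous_quadraticForm Q
  refine ENNReal.div_le_of_le_mul ?_
  rw [lintegral_exp_sq_polar μ hV.locallyLipschitz.continuous Q u hβ, gaussianMoment,
    ← ENNReal.mul_div_right_comm, ← shiftedPartition_zero_right,
    ← lintegral_mul_const _ (by fun_prop)]
  gcongr with s
  exact shiftedPartition_le hVeven hV hQ _

theorem lintegral_exp_sq_polar_div_eq (hQ : ∫⁻ x, ENNReal.ofReal (exp (-Q x)) ∂μ ≠ ∞) (u : E)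
    {β : ℝ} (hβ : 0 < β) :
    (∫⁻ x, ENNReal.ofReal (exp (β * QuadraticMap.polar Q u x ^ 2) * exp (-Q x)) ∂μ) /
        (∫⁻ x, ENNReal.ofReal (exp (-Q x)) ∂μ) = gaussianMoment Q u β := by
  have hQc := continuous_quadraticForm Q
  have h := lintegral_exp_sq_polar μ (continuous_const (y := (0 : ℝ))) Q u hβ
  simp only [shiftedPartition, sub_zero] at h
  have hZ : ∫⁻ x, ENNReal.ofReal (exp (-Q x)) ∂μ ≠ 0 :=
    lintegral_ofReal_exp_ne_zero hQc.neg.measurable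
  rw [h, lintegral_mul_const _ (by fun_prop), ENNReal.mul_div_right_comm, ← gaussianMoment,
    ENNReal.mul_div_cancel_right hZ hQ]

theorem brascamp_lieb_exponential_general (hVeven : V.Even) (hV : ConvexOn ℝ Set.univ V)
    (hQ : Q.PosDef) (f : E →ₗ[ℝ] ℝ) {β : ℝ} (hβ : 0 < β) :
    (∫⁻ x, ENNReal.ofReal (exp (β * f x ^ 2) * exp (-Q x - V x)) ∂μ) /
        (∫⁻ x, ENNReal.ofReal (exp (-Q x - V x)) ∂μ) ≤
      (∫⁻ x, ENNReal.ofReal (exp (β * f x ^ 2) * exp (-Q x)) ∂μ) /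
        (∫⁻ x, ENNReal.ofReal (exp (-Q x)) ∂μ) := by
  obtain ⟨u, hu⟩ := exists_forall_eq_polar hQ.anisotropic f
  simp_rw [hu]
  rw [lintegral_exp_sq_polar_div_eq μ
    (integrable_exp_neg_quadraticForm μ hQ).lintegral_lt_top.ne u hβ]
  exact lintegral_exp_sq_polar_div_le μ hVeven hV hQ.nonneg u hβ

end Haar

theorem toQuadraticForm'_apply {ι R : Type*} [Fintype ι] [DecidableEq ι] [CommRing R]
    (A : Matrix ι ι R) (x : ι → R) :
    A.toQuadraticForm' x = x ⬝ᵥ A *ᵥ x := by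
  simp [Matrix.toQuadraticForm', toLinearMap₂'_apply']

/-- **Brascamp–Lieb exponential moment comparison** (Lemma 3.5, estimate (3.2)). For an even
convex potential `V` and a positive definite quadratic form `⟨φ, Aφ⟩`, the exponential moments
`∫ exp(β |f(φ)|²) dμ` of a linear functional under the Gibbs measure
`Z₁⁻¹ e^{-⟨φ,Aφ⟩ - V(φ)} dφ` are dominated by those under the Gaussian measure
`Z₂⁻¹ e^{-⟨φ,Aφ⟩} dφ`; both sides are Lebesgue integrals valued in `[0,∞]`. -/
theorem brascamp_lieb_exponential (n : ℕ) (hn : 1 ≤ n)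
    (V : (Fin n → ℝ) → ℝ) (hVeven : ∀ x, V (-x) = V x) (hVconvex : ConvexOn ℝ Set.univ V)
    (A : Matrix (Fin n) (Fin n) ℝ) (hAsymm : A.IsSymm) (hApos : A.PosDef)
    (f : (Fin n → ℝ) →ₗ[ℝ] ℝ) (β : ℝ) (hβ : 0 < β) :
    (∫⁻ φ : Fin n → ℝ,
        ENNReal.ofReal (Real.exp (β * f φ ^ 2) * Real.exp (-(φ ⬝ᵥ A.mulVec φ) - V φ))) /
        (∫⁻ φ : Fin n → ℝ, ENNReal.ofReal (Real.exp (-(φ ⬝ᵥ A.mulVec φ) - V φ))) ≤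
      (∫⁻ φ : Fin n → ℝ,
          ENNReal.ofReal (Real.exp (β * f φ ^ 2) * Real.exp (-(φ ⬝ᵥ A.mulVec φ)))) /
        (∫⁻ φ : Fin n → ℝ, ENNReal.ofReal (Real.exp (-(φ ⬝ᵥ A.mulVec φ)))) := by
  simpa only [toQuadraticForm'_apply] using
    brascamp_lieb_exponential_general volume hVeven hVconvex hApos.toQuadraticForm' f hβ
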